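/- Let q ≥ 3 be a prime power and B ≥ 2 a real constant. There exists a constant C = C(q, B) such that for all integers n ≥ 2 and all integers k with 1 ≤ k ≤ n/B, writing Y = log(n−k), one has Σ_{j integer, e·q·Y < j ≤ k} C(q−1+k−j, q−1) · N'(n+j−k, j) ≤ C · q^{n−k} · (n−k)^{q−2}, where C(·,·) denotes a binomial coefficient and e is Euler's number. -/

import Mathlib

open Polynomial

/-- Number of monic irreducible factors counted with multiplicity. -/
noncomputable def Omega {F : Type*} [Field F] (f : F[X]) : ℕ :=
  (UniqueFactorizationMonoid.factors f).card

/-- `Ncount' F n k` = number of monic polynomials of degree `n` over `F` with no root in `F`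
and with `Omega f = k`. -/
noncomputable def Ncount' (F : Type*) [Field F] (n k : ℕ) : ℕ :=
  Set.ncard {f : F[X] | f.Monic ∧ f.natDegree = n ∧ (∀ a : F, f.eval a ≠ 0) ∧ Omega f = k}

/-!
Rankin's trick with parameter `e`, the minimiser of `z / log z`: the sum over `j > x` is at most
`e ^ (-x)` times the sum weighted by `e ^ j`, and with `j = Ω f` and `deg f - Ω f = m` that weighted
sum is the coefficient `a m` of `t ^ m` in the Euler product `∏ (1 - z * t ^ (deg P - 1))⁻¹` over
monic irreducibles with `deg P ≥ 2`, at `z = e`. The logarithmic derivative and the bound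
`q ^ d / d` for the number of monic irreducibles of degree `d` give
`m * a m ≤ ∑ j < m, q ^ (m - j) * (q * z + ε (m - j)) * a j` with `ε` geometrically small as long as
`z < q`. A discrete Grönwall argument yields `a m = O (q ^ m * m ^ (q * z - 1))`. At
`x = e * q * log m` the factor `e ^ (-x) = m ^ (-e * q)` cancels `m ^ (e * q)`, and the binomial
coefficients cost `m ^ (q - 1)`.
-/

open Finset UniqueFactorizationMonoid

section Recurrence

lemma sum_range_sub_le_tsum {ε : ℕ → ℝ} (hε : Summable ε) (hε0 : ∀ l, 0 ≤ ε l) (m : ℕ) :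
    ∑ j ∈ range m, ε (m - j) ≤ ∑' l, ε l := by
  rw [← sum_image (f := ε) (g := fun j => m - j)]
  · exact hε.sum_le_tsum _ fun l _ => hε0 l
  · intro i hi j hj hij
    simp only [coe_range, Set.mem_Iio] at hi hj hij
    omega

lemma sum_Ico_inv_le_one_add_log {n : ℕ} : ∑ i ∈ Ico 1 n, (i : ℝ)⁻¹ ≤ 1 + Real.log n := by
  calc ∑ i ∈ Ico 1 n, (i : ℝ)⁻¹ ≤ ∑ i ∈ Icc 1 n, (i : ℝ)⁻¹ :=
        sum_le_sum_of_subset_of_nonneg Ico_subset_Icc_self fun i _ _ => by positivity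
    _ = (harmonic n : ℝ) := by rw [harmonic_eq_sum_Icc]; push_cast; rfl
    _ ≤ 1 + Real.log n := harmonic_le_one_add_log n

variable {A ε : ℕ → ℝ} {α E : ℝ}

lemma mul_le_add_mul_sum_range (hA : ∀ m, 0 ≤ A m)
    (hrec : ∀ m, m * A m ≤ ∑ j ∈ range m, (α + ε (m - j)) * A j) (hεE : ∀ l, ε l ≤ E) (m : ℕ) :
    m * A m ≤ (α + E) * ∑ j ∈ range m, A j := by
  refine (hrec m).trans ?_
  rw [mul_sum]
  gcongr with j
  · exact hA j
  · exact hεE _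

/-- In `m = (m - j) + j` the first summand is absorbed by the first moment of `ε` and the second
one by the crude bound on `j * A j`. -/
lemma mul_sum_error_le (hA : ∀ m, 0 ≤ A m) (hε : ∀ l, 0 ≤ ε l) (hα : 0 ≤ α)
    (hrec : ∀ m, m * A m ≤ ∑ j ∈ range m, (α + ε (m - j)) * A j)
    (hmoment : ∀ l : ℕ, (1 + l) * ε l ≤ E) (hsum : ∀ m, ∑ j ∈ range m, ε (m - j) ≤ E) (m : ℕ) :
    m * ∑ j ∈ range m, ε (m - j) * A j ≤ E * (1 + α + E) * ∑ j ∈ range m, A j := by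
  have hE : 0 ≤ E := by simpa using hsum 0
  have hεE : ∀ l, ε l ≤ E := fun l =>
    (le_mul_of_one_le_left (hε l) (by simp)).trans (hmoment l)
  have hS : 0 ≤ ∑ j ∈ range m, A j := sum_nonneg fun j _ => hA j
  have hterm : ∀ j ∈ range m, m * (ε (m - j) * A j) ≤
      E * A j + ε (m - j) * ((α + E) * ∑ i ∈ range m, A i) := fun j hj => by
    have hjm := (mem_range.1 hj).le
    have hfirst : ((m - j : ℕ) : ℝ) * ε (m - j) * A j ≤ E * A j :=
      mul_le_mul_of_nonneg_right (by linarith [hmoment (m - j), hε (m - j)]) (hA j)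
    have hsecond : j * A j ≤ (α + E) * ∑ i ∈ range m, A i :=
      (mul_le_add_mul_sum_range hA hrec hεE j).trans <| by
        gcongr
        exact fun i _ _ => hA i
    calc m * (ε (m - j) * A j) = ((m - j : ℕ) : ℝ) * ε (m - j) * A j + ε (m - j) * (j * A j) := by
          rw [Nat.cast_sub hjm]; ring
      _ ≤ _ := add_le_add hfirst (mul_le_mul_of_nonneg_left hsecond (hε _))
  calc m * ∑ j ∈ range m, ε (m - j) * A j
      ≤ ∑ j ∈ range m, (E * A j + ε (m - j) * ((α + E) * ∑ i ∈ range m, A i)) := by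
        rw [mul_sum]; exact sum_le_sum hterm
    _ = E * ∑ j ∈ range m, A j +
          (∑ j ∈ range m, ε (m - j)) * ((α + E) * ∑ i ∈ range m, A i) := by
        rw [sum_add_distrib, ← mul_sum, ← sum_mul]
    _ ≤ E * ∑ j ∈ range m, A j + E * ((α + E) * ∑ i ∈ range m, A i) := by
        gcongr; exact hsum m
    _ = E * (1 + α + E) * ∑ j ∈ range m, A j := by ring

lemma sum_range_succ_le_of_mul_le {D : ℝ} {m : ℕ} (hm : 1 ≤ m)
    (hrec : m * A m ≤ ∑ j ∈ range m, (α + ε (m - j)) * A j)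
    (herror : m * ∑ j ∈ range m, ε (m - j) * A j ≤ D * ∑ j ∈ range m, A j) :
    ∑ j ∈ range (m + 1), A j ≤
      (1 + (α * (m : ℝ)⁻¹ + D * ((m : ℝ) ^ 2)⁻¹)) * ∑ j ∈ range m, A j := by
  have hm0 : (0 : ℝ) < m := by exact_mod_cast hm
  simp only [add_mul, sum_add_distrib, ← mul_sum] at hrec
  have hsq : (m : ℝ) ^ 2 * A m ≤ (α * m + D) * ∑ j ∈ range m, A j := by
    linarith [mul_le_mul_of_nonneg_left hrec hm0.le]
  have hAm : A m ≤ (α * m + D) * (∑ j ∈ range m, A j) / (m : ℝ) ^ 2 :=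
    (le_div_iff₀' (by positivity)).2 hsq
  rw [sum_range_succ]
  calc ∑ j ∈ range m, A j + A m
      ≤ ∑ j ∈ range m, A j + (α * m + D) * (∑ j ∈ range m, A j) / (m : ℝ) ^ 2 := by gcongr
    _ = _ := by field_simp

lemma le_mul_rpow_of_succ_le {S : ℕ → ℝ} {D : ℝ} (hα : 0 ≤ α) (hD : 0 ≤ D) (hS : 0 ≤ S 1)
    (hstep : ∀ m : ℕ, 1 ≤ m → S (m + 1) ≤ (1 + (α * (m : ℝ)⁻¹ + D * ((m : ℝ) ^ 2)⁻¹)) * S m)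
    {m : ℕ} (hm : 1 ≤ m) :
    S m ≤ S 1 * Real.exp (α + D * ∑' i : ℕ, ((i : ℝ) ^ 2)⁻¹) * (m : ℝ) ^ α := by
  have hsq : ∑ i ∈ Ico 1 m, ((i : ℝ) ^ 2)⁻¹ ≤ ∑' i : ℕ, ((i : ℝ) ^ 2)⁻¹ :=
    (Real.summable_nat_pow_inv.2 one_lt_two).sum_le_tsum _ fun i _ => by positivity
  have hexponent : ∑ i ∈ Ico 1 m, (α * (i : ℝ)⁻¹ + D * ((i : ℝ) ^ 2)⁻¹) ≤
      α + D * ∑' i : ℕ, ((i : ℝ) ^ 2)⁻¹ + Real.log m * α := by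
    rw [sum_add_distrib, ← mul_sum, ← mul_sum]
    linarith [mul_le_mul_of_nonneg_left (sum_Ico_inv_le_one_add_log (n := m)) hα,
      mul_le_mul_of_nonneg_left hsq hD]
  have hgronwall := discrete_gronwall (u := S) (b := fun _ => 0)
    (c := fun i => α * (i : ℝ)⁻¹ + D * ((i : ℝ) ^ 2)⁻¹) hS (by simpa using hstep)
    (fun i _ => by positivity) (fun _ _ => le_rfl) hm
  calc S m ≤ S 1 * Real.exp (∑ i ∈ Ico 1 m, (α * (i : ℝ)⁻¹ + D * ((i : ℝ) ^ 2)⁻¹)) := by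
        simpa using hgronwall
    _ ≤ S 1 * Real.exp (α + D * ∑' i : ℕ, ((i : ℝ) ^ 2)⁻¹ + Real.log m * α) := by gcongr
    _ = _ := by rw [Real.exp_add, Real.rpow_def_of_pos (by exact_mod_cast hm), mul_assoc]

theorem exists_le_mul_rpow_of_mul_le_sum_range (hA : ∀ m, 0 ≤ A m) (hε : ∀ l, 0 ≤ ε l) (hα : 0 ≤ α)
    (hsummable : Summable fun l : ℕ => (1 + l) * ε l)
    (hrec : ∀ m, m * A m ≤ ∑ j ∈ range m, (α + ε (m - j)) * A j) :
    ∃ K : ℝ, ∀ m : ℕ, 1 ≤ m → A m ≤ K * (m : ℝ) ^ (α - 1) := by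
  set E := ∑' l : ℕ, (1 + l) * ε l
  set D := E * (1 + α + E)
  set S : ℕ → ℝ := fun m => ∑ j ∈ range m, A j
  have hnonneg : ∀ l : ℕ, 0 ≤ (1 + l) * ε l := fun l => mul_nonneg (by positivity) (hε l)
  have hE : 0 ≤ E := tsum_nonneg hnonneg
  have hle : ∀ l : ℕ, ε l ≤ (1 + l) * ε l := fun l => le_mul_of_one_le_left (hε l) (by simp)
  have hmoment : ∀ l : ℕ, (1 + l) * ε l ≤ E := fun l => hsummable.le_tsum l fun i _ => hnonneg i
  have hsum : ∀ m, ∑ j ∈ range m, ε (m - j) ≤ E := fun m =>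
    (sum_le_sum fun j _ => hle (m - j)).trans (sum_range_sub_le_tsum hsummable hnonneg m)
  have hgrowth : ∀ m : ℕ, 1 ≤ m →
      S m ≤ S 1 * Real.exp (α + D * ∑' i : ℕ, ((i : ℝ) ^ 2)⁻¹) * (m : ℝ) ^ α := fun m =>
    le_mul_rpow_of_succ_le hα (by positivity) (sum_nonneg fun j _ => hA j) fun i hi =>
      sum_range_succ_le_of_mul_le hi (hrec i) (mul_sum_error_le hA hε hα hrec hmoment hsum i)
  refine ⟨(α + E) * (S 1 * Real.exp (α + D * ∑' i : ℕ, ((i : ℝ) ^ 2)⁻¹)), fun m hm => ?_⟩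
  have hm0 : (0 : ℝ) < m := by exact_mod_cast hm
  rw [Real.rpow_sub_one hm0.ne', ← mul_div_assoc, le_div_iff₀' hm0, mul_assoc]
  exact (mul_le_add_mul_sum_range hA hrec (fun l => (hle l).trans (hmoment l)) m).trans
    (mul_le_mul_of_nonneg_left (hgrowth m hm) (by positivity))

end Recurrence

section Factorization

open scoped Classical in
lemma Omega_eq_card_normalizedFactors {F : Type*} [Field F] (f : F[X]) :
    Omega f = (normalizedFactors f).card := by
  simp [Omega, normalizedFactors]

lemma Omega_pow_mul {F : Type*} [Field F] {P g : F[X]} (hP : Irreducible P) (hg : g ≠ 0) (r : ℕ) :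
    Omega (P ^ r * g) = r + Omega g := by
  classical
  simp [Omega_eq_card_normalizedFactors, normalizedFactors_mul (pow_ne_zero r hP.ne_zero) hg,
    normalizedFactors_of_irreducible_pow hP]

open scoped Classical in
lemma sum_natDegree_normalizedFactors {F : Type*} [Field F] {f : F[X]} (hf : f.Monic) :
    ((normalizedFactors f).map natDegree).sum = f.natDegree := by
  have hmonic : ∀ P ∈ normalizedFactors f, P.Monic := fun P hP =>
    ((Polynomial.mem_normalizedFactors_iff hf.ne_zero).1 hP).2.1
  have hprod : (normalizedFactors f).prod = f := by
    simpa [hf.leadingCoeff] using leadingCoeff_mul_prod_normalizedFactors f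
  rw [← natDegree_multiset_prod_of_monic _ hmonic, hprod]

open scoped Classical in
lemma sum_natDegree_sub_one_add_Omega {F : Type*} [Field F] {f : F[X]} (hf : f.Monic) :
    ((normalizedFactors f).map fun P => P.natDegree - 1).sum + Omega f = f.natDegree := by
  have hpos : ∀ P ∈ normalizedFactors f, P.natDegree - 1 + 1 = P.natDegree := fun P hP =>
    Nat.sub_add_cancel ((Polynomial.mem_normalizedFactors_iff hf.ne_zero).1 hP).1.natDegree_pos
  rw [← sum_natDegree_normalizedFactors hf, ← Multiset.map_congr rfl hpos, Multiset.sum_map_add,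
    Omega_eq_card_normalizedFactors]
  simp

lemma two_le_natDegree_of_irreducible_of_dvd {F : Type*} [Field F] {f P : F[X]}
    (hf : ∀ a : F, f.eval a ≠ 0) (hP : Irreducible P) (hdvd : P ∣ f) : 2 ≤ P.natDegree := by
  have hne : P.natDegree ≠ 1 := fun h => by
    obtain ⟨a, ha⟩ := exists_root_of_degree_eq_one
      ((degree_eq_iff_natDegree_eq_of_pos one_pos).2 h)
    exact hf a (ha.dvd hdvd)
  have := hP.natDegree_pos
  omega

lemma two_mul_Omega_le_natDegree {F : Type*} [Field F] {f : F[X]} (hf : f.Monic)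
    (hroot : ∀ a : F, f.eval a ≠ 0) : 2 * Omega f ≤ f.natDegree := by
  classical
  have htwo : ∀ d ∈ (normalizedFactors f).map natDegree, 2 ≤ d := by
    intro d hd
    obtain ⟨P, hP, rfl⟩ := Multiset.mem_map.1 hd
    obtain ⟨hirr, -, hdvd⟩ := (Polynomial.mem_normalizedFactors_iff hf.ne_zero).1 hP
    exact two_le_natDegree_of_irreducible_of_dvd hroot hirr hdvd
  simpa [sum_natDegree_normalizedFactors hf, Omega_eq_card_normalizedFactors, mul_comm] using
    Multiset.card_nsmul_le_sum htwo

open scoped Classical in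
lemma pow_dvd_of_le_count_normalizedFactors {F : Type*} [Field F] {f P : F[X]} {r : ℕ}
    (hf : f ≠ 0) (hr : r ≤ (normalizedFactors f).count P) : P ^ r ∣ f := by
  rw [← Multiset.prod_replicate, ← (prod_normalizedFactors hf).dvd_iff_dvd_right]
  exact Multiset.prod_dvd_prod_of_le (Multiset.le_count_iff_replicate_le.1 hr)

end Factorization

section Finite

variable (F : Type*) [Field F] [Finite F]

lemma finite_setOf_natDegree_le (n : ℕ) : {f : F[X] | f.natDegree ≤ n}.Finite := by
  have : Finite (degreeLT F (n + 1)) := Finite.of_equiv _ (degreeLTEquiv F (n + 1)).symm.toEquiv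
  refine (Set.toFinite (degreeLT F (n + 1) : Set F[X])).subset fun f (hf : f.natDegree ≤ n) => ?_
  rw [SetLike.mem_coe, mem_degreeLT]
  exact degree_le_natDegree.trans_lt (by exact_mod_cast Nat.lt_succ_of_le hf)

open scoped Classical in
/-- The finite set of monic irreducible polynomials of degree `d`. -/
noncomputable def monicIrreducibles (d : ℕ) : Finset F[X] :=
  {P ∈ (finite_setOf_natDegree_le F d).toFinset | P.Monic ∧ Irreducible P ∧ P.natDegree = d}

open scoped Classical in
/-- The finite set of monic polynomials `f` without roots whose excess `deg f - Ω f` is `m`. The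
excess is additive under multiplication; the bound `deg f ≤ 2 * m` only witnesses finiteness. -/
noncomputable def rootFree (m : ℕ) : Finset F[X] :=
  {f ∈ (finite_setOf_natDegree_le F (2 * m)).toFinset |
    f.Monic ∧ (∀ a : F, f.eval a ≠ 0) ∧ f.natDegree = Omega f + m}

/-- The coefficient of `t ^ m` in the Euler product `∏ (1 - z * t ^ (deg P - 1))⁻¹` over the monic
irreducible polynomials `P` of degree at least two. -/
noncomputable def eulerCoeff (z : ℝ) (m : ℕ) : ℝ :=
  ∑ f ∈ rootFree F m, z ^ Omega f

variable {F}

lemma mem_monicIrreducibles {d : ℕ} {P : F[X]} :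
    P ∈ monicIrreducibles F d ↔ P.Monic ∧ Irreducible P ∧ P.natDegree = d := by
  simp only [monicIrreducibles, mem_filter, Set.Finite.mem_toFinset, Set.mem_ofPred_eq,
    and_iff_right_iff_imp]
  exact fun h => h.2.2.le

lemma mem_rootFree {m : ℕ} {f : F[X]} :
    f ∈ rootFree F m ↔ f.Monic ∧ (∀ a : F, f.eval a ≠ 0) ∧ f.natDegree = Omega f + m := by
  simp only [rootFree, mem_filter, Set.Finite.mem_toFinset, Set.mem_ofPred_eq,
    and_iff_right_iff_imp]
  rintro ⟨hf, hroot, hdeg⟩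
  have := two_mul_Omega_le_natDegree hf hroot
  omega

lemma mul_card_monicIrreducibles_le {d : ℕ} (hd : d ≠ 0) :
    d * #(monicIrreducibles F d) ≤ Nat.card F ^ d := by
  have hcard : 1 < Nat.card F := Finite.one_lt_card
  have hdvd : ∏ P ∈ monicIrreducibles F d, P ∣ (X ^ Nat.card F ^ d - X : F[X]) := by
    refine prod_dvd_of_coprime (fun P hP Q hQ hne => ?_) fun P hP => ?_
    · obtain ⟨hPm, hPi, -⟩ := mem_monicIrreducibles.1 hP
      obtain ⟨hQm, hQi, -⟩ := mem_monicIrreducibles.1 hQ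
      exact hPi.coprime_iff_not_dvd.2 fun h =>
        hne (eq_of_monic_of_associated hPm hQm (hPi.associated_of_dvd hQi h))
    · obtain ⟨-, hPi, hPd⟩ := mem_monicIrreducibles.1 hP
      exact hPi.natDegree_dvd_iff_dvd_X_pow_card_pow_sub_X.1 hPd.dvd
  calc d * #(monicIrreducibles F d) = ∑ P ∈ monicIrreducibles F d, P.natDegree := by
        rw [sum_congr rfl fun P hP => (mem_monicIrreducibles.1 hP).2.2, sum_const, smul_eq_mul,
          mul_comm]
    _ = (∏ P ∈ monicIrreducibles F d, P).natDegree :=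
        (natDegree_prod_of_monic _ _ fun P hP => (mem_monicIrreducibles.1 hP).1).symm
    _ ≤ (X ^ Nat.card F ^ d - X : F[X]).natDegree :=
        natDegree_le_of_dvd hdvd (FiniteField.X_pow_card_pow_sub_X_ne_zero F hd hcard)
    _ = Nat.card F ^ d := FiniteField.X_pow_card_pow_sub_X_natDegree_eq F hd hcard

lemma exists_rootFree_of_pow_dvd {m s r : ℕ} {f P : F[X]} (hf : f ∈ rootFree F m)
    (hP : P ∈ monicIrreducibles F (s + 1)) (hdvd : P ^ r ∣ f) :
    ∃ j, s * r + j = m ∧ ∃ g ∈ rootFree F j, P ^ r * g = f := by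
  obtain ⟨hfm, hroot, hexcess⟩ := mem_rootFree.1 hf
  obtain ⟨hPm, hPi, hPd⟩ := mem_monicIrreducibles.1 hP
  obtain ⟨g, rfl⟩ := hdvd
  have hgm : g.Monic := (hPm.pow r).of_mul_monic_left hfm
  have hgexcess := sum_natDegree_sub_one_add_Omega hgm
  rw [Omega_pow_mul hPi hgm.ne_zero, (hPm.pow r).natDegree_mul hgm, hPm.natDegree_pow, hPd,
    mul_add, mul_one, mul_comm r] at hexcess
  exact ⟨g.natDegree - Omega g, by omega, g,
    mem_rootFree.2 ⟨hgm, fun a ha => hroot a (by simp [ha]), by omega⟩, rfl⟩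

open scoped Classical in
lemma sum_filter_pow_dvd_le {z : ℝ} (hz : 0 ≤ z) {m s r j : ℕ} (hm : s * r + j = m) {P : F[X]}
    (hP : P ∈ monicIrreducibles F (s + 1)) :
    ∑ f ∈ rootFree F m with P ^ r ∣ f, z ^ Omega f ≤ z ^ r * eulerCoeff F z j := by
  have hPi := (mem_monicIrreducibles.1 hP).2.1
  have hsubset : {f ∈ rootFree F m | P ^ r ∣ f} ⊆ (rootFree F j).image (P ^ r * ·) := by
    intro f hf
    obtain ⟨hfm, hdvd⟩ := mem_filter.1 hf
    obtain ⟨i, hi, g, hg, rfl⟩ := exists_rootFree_of_pow_dvd hfm hP hdvd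
    obtain rfl : i = j := by omega
    exact mem_image_of_mem _ hg
  calc ∑ f ∈ rootFree F m with P ^ r ∣ f, z ^ Omega f
      ≤ ∑ f ∈ (rootFree F j).image (P ^ r * ·), z ^ Omega f :=
        sum_le_sum_of_subset_of_nonneg hsubset fun f _ _ => by positivity
    _ = ∑ g ∈ rootFree F j, z ^ Omega (P ^ r * g) :=
        sum_image fun a _ b _ hab => mul_left_cancel₀ (pow_ne_zero r hPi.ne_zero) hab
    _ = z ^ r * eulerCoeff F z j := by
        rw [eulerCoeff, mul_sum]
        refine sum_congr rfl fun g hg => ?_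
        rw [Omega_pow_mul hPi (mem_rootFree.1 hg).1.ne_zero, pow_add]

open scoped Classical in
lemma sum_count_mul_natDegree_sub_one {m : ℕ} {f : F[X]} (hf : f ∈ rootFree F m) :
    ∑ P ∈ primeFactors f, (normalizedFactors f).count P * (P.natDegree - 1) = m := by
  obtain ⟨hfm, -, hexcess⟩ := mem_rootFree.1 hf
  have hsum := sum_natDegree_sub_one_add_Omega hfm
  rw [sum_multiset_map_count, toFinset_normalizedFactors] at hsum
  simp only [smul_eq_mul] at hsum
  omega

open scoped Classical in
lemma mem_monicIrreducibles_of_mem_primeFactors {m : ℕ} {f P : F[X]} (hf : f ∈ rootFree F m)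
    (hP : P ∈ primeFactors f) :
    P ∈ monicIrreducibles F (P.natDegree - 1 + 1) ∧ 1 ≤ P.natDegree - 1 := by
  obtain ⟨hfm, hroot, -⟩ := mem_rootFree.1 hf
  obtain ⟨hPi, hPm, hdvd⟩ :=
    (Polynomial.mem_normalizedFactors_iff hfm.ne_zero).1 (mem_primeFactors.1 hP)
  have := two_le_natDegree_of_irreducible_of_dvd hroot hPi hdvd
  exact ⟨mem_monicIrreducibles.2 ⟨hPm, hPi, by omega⟩, by omega⟩

open scoped Classical in
lemma natDegree_sub_one_mul_mem_Icc {m r : ℕ} {f P : F[X]} (hf : f ∈ rootFree F m)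
    (hP : P ∈ primeFactors f) (hr : r ∈ Icc 1 ((normalizedFactors f).count P)) :
    (P.natDegree - 1) * r ∈ Icc 1 m := by
  obtain ⟨hr1, hrcount⟩ := mem_Icc.1 hr
  obtain ⟨hirr, hdeg⟩ := mem_monicIrreducibles_of_mem_primeFactors hf hP
  obtain ⟨j, hj, -⟩ := exists_rootFree_of_pow_dvd hf hirr
    (pow_dvd_of_le_count_normalizedFactors (mem_rootFree.1 hf).1.ne_zero hrcount)
  exact mem_Icc.2 ⟨Nat.mul_pos hdeg hr1, by omega⟩

open scoped Classical in
/-- The excess of `f` is the sum of `deg P - 1` over the pairs `(P, r)` with `r ≥ 1` and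
`P ^ r ∣ f`; such a pair is sorted by the excess `j` of `f / P ^ r` and by `(deg P - 1, r)`. -/
lemma le_sum_mul_card_pow_dvd {m : ℕ} {f : F[X]} (hf : f ∈ rootFree F m) :
    m ≤ ∑ j ∈ range m, ∑ x ∈ (m - j).divisorsAntidiagonal,
      x.1 * #{P ∈ monicIrreducibles F (x.1 + 1) | P ^ x.2 ∣ f} := by
  set D := (primeFactors f).sigma fun P => Icc 1 ((normalizedFactors f).count P)
    with hD
  set T := (range m).sigma fun j => (m - j).divisorsAntidiagonal with hT
  let sort : (Σ _ : F[X], ℕ) → (Σ _ : ℕ, ℕ × ℕ) := fun t =>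
    ⟨m - (t.1.natDegree - 1) * t.2, t.1.natDegree - 1, t.2⟩
  have hsort : ∀ t ∈ D, sort t ∈ T := fun t ht => by
    obtain ⟨hP, hr⟩ := mem_sigma.1 ht
    obtain ⟨hpos, hle⟩ := mem_Icc.1 (natDegree_sub_one_mul_mem_Icc hf hP hr)
    simp only [sort, hT, mem_sigma, mem_range, Nat.mem_divisorsAntidiagonal]
    omega
  have hfiber : ∀ e ∈ T, #{t ∈ D | sort t = e} ≤
      #{P ∈ monicIrreducibles F (e.2.1 + 1) | P ^ e.2.2 ∣ f} := fun e _ => by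
    refine card_le_card_of_injOn Sigma.fst (fun t ht => ?_) fun t ht u hu htu => ?_
    · obtain ⟨htD, rfl⟩ := mem_filter.1 ht
      obtain ⟨hP, hr⟩ := mem_sigma.1 htD
      exact mem_filter.2 ⟨(mem_monicIrreducibles_of_mem_primeFactors hf hP).1,
        pow_dvd_of_le_count_normalizedFactors (mem_rootFree.1 hf).1.ne_zero (mem_Icc.1 hr).2⟩
    · have hsnd := congrArg (fun e => e.2.2) ((mem_filter.1 ht).2.trans (mem_filter.1 hu).2.symm)
      exact Sigma.ext htu (heq_of_eq hsnd)
  calc m = ∑ t ∈ D, (t.1.natDegree - 1) := by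
        simp [hD, sum_sigma, sum_count_mul_natDegree_sub_one hf]
    _ = ∑ e ∈ T, ∑ t ∈ D with sort t = e, (t.1.natDegree - 1) :=
        (sum_fiberwise_of_maps_to hsort _).symm
    _ = ∑ e ∈ T, e.2.1 * #{t ∈ D | sort t = e} := by
        refine sum_congr rfl fun e _ => ?_
        rw [sum_congr rfl (g := fun _ => e.2.1) fun t ht => by rw [← (mem_filter.1 ht).2],
          sum_const, smul_eq_mul, mul_comm]
    _ ≤ ∑ e ∈ T, e.2.1 * #{P ∈ monicIrreducibles F (e.2.1 + 1) | P ^ e.2.2 ∣ f} :=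
        sum_le_sum fun e he => Nat.mul_le_mul_left _ (hfiber e he)
    _ = _ := sum_sigma _ _ _

lemma eulerCoeff_nonneg {z : ℝ} (hz : 0 ≤ z) (m : ℕ) : 0 ≤ eulerCoeff F z m :=
  sum_nonneg fun _ _ => by positivity

open scoped Classical in
lemma sum_mul_card_pow_dvd_le {z : ℝ} (hz : 0 ≤ z) {m s r j : ℕ} (hm : s * r + j = m) :
    ∑ f ∈ rootFree F m, (s * #{P ∈ monicIrreducibles F (s + 1) | P ^ r ∣ f} : ℝ) * z ^ Omega f ≤
      (Nat.card F : ℝ) ^ (s + 1) * z ^ r * eulerCoeff F z j := by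
  have hcard : (s : ℝ) * #(monicIrreducibles F (s + 1)) ≤ (Nat.card F : ℝ) ^ (s + 1) := by
    exact_mod_cast (Nat.mul_le_mul_right _ s.le_succ).trans
      (mul_card_monicIrreducibles_le (F := F) s.succ_ne_zero)
  calc ∑ f ∈ rootFree F m, (s * #{P ∈ monicIrreducibles F (s + 1) | P ^ r ∣ f} : ℝ) * z ^ Omega f
      = s * ∑ P ∈ monicIrreducibles F (s + 1), ∑ f ∈ rootFree F m with P ^ r ∣ f, z ^ Omega f := by
        simp only [sum_filter]
        rw [sum_comm, mul_sum]
        refine sum_congr rfl fun f _ => ?_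
        rw [← sum_filter, sum_const, nsmul_eq_mul, mul_assoc]
    _ ≤ s * ∑ _ ∈ monicIrreducibles F (s + 1), z ^ r * eulerCoeff F z j := by
        gcongr with _ hP
        exact sum_filter_pow_dvd_le hz hm hP
    _ = s * #(monicIrreducibles F (s + 1)) * (z ^ r * eulerCoeff F z j) := by
        rw [sum_const, nsmul_eq_mul, mul_assoc]
    _ ≤ (Nat.card F : ℝ) ^ (s + 1) * (z ^ r * eulerCoeff F z j) := by
        gcongr
        exact mul_nonneg (by positivity) (eulerCoeff_nonneg hz j)
    _ = _ := by ring

lemma mul_eulerCoeff_le {z : ℝ} (hz : 0 ≤ z) (m : ℕ) :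
    m * eulerCoeff F z m ≤ ∑ j ∈ range m,
      (∑ x ∈ (m - j).divisorsAntidiagonal, (Nat.card F : ℝ) ^ (x.1 + 1) * z ^ x.2) *
        eulerCoeff F z j := by
  classical
  have hterm : ∀ j ∈ range m, ∀ x ∈ (m - j).divisorsAntidiagonal,
      ∑ f ∈ rootFree F m,
        (x.1 * #{P ∈ monicIrreducibles F (x.1 + 1) | P ^ x.2 ∣ f} : ℝ) * z ^ Omega f ≤
      (Nat.card F : ℝ) ^ (x.1 + 1) * z ^ x.2 * eulerCoeff F z j := fun j hj x hx => by
    refine sum_mul_card_pow_dvd_le hz ?_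
    rw [(Nat.mem_divisorsAntidiagonal.1 hx).1, Nat.sub_add_cancel (mem_range.1 hj).le]
  calc m * eulerCoeff F z m = ∑ f ∈ rootFree F m, (m : ℝ) * z ^ Omega f := by
        rw [eulerCoeff, mul_sum]
    _ ≤ ∑ f ∈ rootFree F m, (∑ j ∈ range m, ∑ x ∈ (m - j).divisorsAntidiagonal,
          (x.1 * #{P ∈ monicIrreducibles F (x.1 + 1) | P ^ x.2 ∣ f} : ℝ)) * z ^ Omega f := by
        gcongr with f hf
        exact_mod_cast le_sum_mul_card_pow_dvd hf
    _ = ∑ j ∈ range m, ∑ x ∈ (m - j).divisorsAntidiagonal, ∑ f ∈ rootFree F m,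
          (x.1 * #{P ∈ monicIrreducibles F (x.1 + 1) | P ^ x.2 ∣ f} : ℝ) * z ^ Omega f := by
        simp only [sum_mul]
        rw [sum_comm]
        exact sum_congr rfl fun j _ => sum_comm
    _ ≤ ∑ j ∈ range m, ∑ x ∈ (m - j).divisorsAntidiagonal,
          (Nat.card F : ℝ) ^ (x.1 + 1) * z ^ x.2 * eulerCoeff F z j :=
        sum_le_sum fun j hj => sum_le_sum (hterm j hj)
    _ = _ := by simp only [sum_mul]

end Finite

section DivisorSum

variable {q τ : ℝ}

lemma pow_mul_pow_le_of_two_le (hq : 0 ≤ q) (hτ : 0 ≤ τ) (hτ1 : τ ≤ 1) (hz : 1 ≤ q * τ ^ 2)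
    {s r : ℕ} (hs : 1 ≤ s) (hr : 2 ≤ r) :
    q ^ (s + 1) * (q * τ ^ 2) ^ r ≤ q ^ (s * r) * (q * (q * τ ^ 2) * τ ^ (s * r)) := by
  obtain ⟨t, rfl⟩ := Nat.exists_eq_add_of_le' hr
  have hexponent : s * (t + 2) ≤ 2 * (s * (t + 1)) := by nlinarith
  have hgrow : (q * τ ^ 2) ^ (t + 1) ≤ q ^ (s * (t + 1)) * τ ^ (s * (t + 2)) :=
    calc (q * τ ^ 2) ^ (t + 1) ≤ (q * τ ^ 2) ^ (s * (t + 1)) :=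
          pow_le_pow_right₀ hz (Nat.le_mul_of_pos_left _ hs)
      _ = q ^ (s * (t + 1)) * τ ^ (2 * (s * (t + 1))) := by rw [mul_pow, ← pow_mul]
      _ ≤ q ^ (s * (t + 1)) * τ ^ (s * (t + 2)) :=
          mul_le_mul_of_nonneg_left (pow_le_pow_of_le_one hτ hτ1 hexponent) (by positivity)
  calc q ^ (s + 1) * (q * τ ^ 2) ^ (t + 2)
      = q ^ s * (q * (q * τ ^ 2)) * (q * τ ^ 2) ^ (t + 1) := by ring
    _ ≤ q ^ s * (q * (q * τ ^ 2)) * (q ^ (s * (t + 1)) * τ ^ (s * (t + 2))) := by gcongr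
    _ = _ := by ring

lemma sum_divisorsAntidiagonal_pow_mul_pow_le (hq : 0 ≤ q) (hτ : 0 ≤ τ) (hτ1 : τ ≤ 1)
    (hz : 1 ≤ q * τ ^ 2) (l : ℕ) :
    ∑ x ∈ l.divisorsAntidiagonal, q ^ (x.1 + 1) * (q * τ ^ 2) ^ x.2 ≤
      q ^ l * (q * (q * τ ^ 2) + q * (q * τ ^ 2) * (l * τ ^ l)) := by
  set z := q * τ ^ 2
  have hterm : ∀ x ∈ l.divisorsAntidiagonal, q ^ (x.1 + 1) * z ^ x.2 ≤
      (if x = (l, 1) then q ^ l * (q * z) else 0) + q ^ l * (q * z * τ ^ l) := by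
    rintro ⟨s, r⟩ hx
    obtain ⟨rfl, hl⟩ := Nat.mem_divisorsAntidiagonal.1 hx
    obtain ⟨hs, hr⟩ := Nat.mul_ne_zero_iff.1 hl
    have hnonneg : 0 ≤ q ^ (s * r) * (q * z * τ ^ (s * r)) := by positivity
    rcases (Nat.one_le_iff_ne_zero.2 hr).eq_or_lt with rfl | hr2
    · simp only [mul_one, if_true, pow_one] at hnonneg ⊢
      linarith [show q ^ (s + 1) * z = q ^ s * (q * z) by ring]
    · rw [if_neg fun h => hr2.ne' (congrArg Prod.snd h), zero_add]
      exact pow_mul_pow_le_of_two_le hq hτ hτ1 hz (Nat.one_le_iff_ne_zero.2 hs) hr2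
  have hcard : #l.divisorsAntidiagonal ≤ l := by
    rw [← Nat.map_div_right_divisors, card_map]
    exact Nat.card_divisors_le_self l
  calc ∑ x ∈ l.divisorsAntidiagonal, q ^ (x.1 + 1) * z ^ x.2
      ≤ ∑ x ∈ l.divisorsAntidiagonal,
          ((if x = (l, 1) then q ^ l * (q * z) else 0) + q ^ l * (q * z * τ ^ l)) :=
        sum_le_sum hterm
    _ = (if (l, 1) ∈ l.divisorsAntidiagonal then q ^ l * (q * z) else 0) +
          #l.divisorsAntidiagonal * (q ^ l * (q * z * τ ^ l)) := by
        rw [sum_add_distrib, sum_ite_eq', sum_const, nsmul_eq_mul]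
    _ ≤ q ^ l * (q * z) + l * (q ^ l * (q * z * τ ^ l)) := by
        gcongr
        split_ifs
        · exact le_rfl
        · positivity
    _ = _ := by ring

end DivisorSum

section Tail

variable {F : Type*} [Field F] [Finite F] {z : ℝ}

theorem exists_eulerCoeff_le (hz : 1 ≤ z) (hzq : z < Nat.card F) :
    ∃ K : ℝ, ∀ m : ℕ, 1 ≤ m →
      eulerCoeff F z m ≤ K * Nat.card F ^ m * (m : ℝ) ^ (Nat.card F * z - 1) := by
  set q : ℝ := (Nat.card F : ℝ)
  have hq0 : 0 < q := by linarith
  set τ := √(z / q)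
  have hτ0 : 0 ≤ τ := Real.sqrt_nonneg _
  have hτ1 : τ < 1 := by
    rw [Real.sqrt_lt' one_pos, one_pow, div_lt_one hq0]
    exact hzq
  have hzτ : q * τ ^ 2 = z := by
    rw [Real.sq_sqrt (by positivity), mul_div_cancel₀ _ hq0.ne']
  have hsummable : Summable fun l : ℕ => (1 + l) * (q * z * (l * τ ^ l)) := by
    have hnorm : ‖τ‖ < 1 := by rwa [Real.norm_of_nonneg hτ0]
    refine (((summable_pow_mul_geometric_of_norm_lt_one 1 hnorm).add
      (summable_pow_mul_geometric_of_norm_lt_one 2 hnorm)).mul_left (q * z)).congr fun l => ?_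
    ring
  have hrec : ∀ m : ℕ, m * (eulerCoeff F z m / q ^ m) ≤ ∑ j ∈ range m,
      (q * z + q * z * ((m - j : ℕ) * τ ^ (m - j))) * (eulerCoeff F z j / q ^ j) := fun m => by
    rw [← mul_div_assoc, div_le_iff₀ (by positivity), sum_mul]
    refine (mul_eulerCoeff_le (by positivity) m).trans (sum_le_sum fun j hj => ?_)
    have hdivisors := sum_divisorsAntidiagonal_pow_mul_pow_le hq0.le hτ0 hτ1.le (by rwa [hzτ])
      (m - j)
    rw [hzτ] at hdivisors
    refine (mul_le_mul_of_nonneg_right hdivisors (eulerCoeff_nonneg (by positivity) j)).trans_eq ?_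
    rw [pow_sub₀ q hq0.ne' (mem_range.1 hj).le]
    ring
  obtain ⟨K, hK⟩ := exists_le_mul_rpow_of_mul_le_sum_range
    (fun m => div_nonneg (eulerCoeff_nonneg (by positivity) m) (by positivity))
    (fun l => by positivity) (by positivity) hsummable hrec
  refine ⟨K, fun m hm => ?_⟩
  rw [mul_right_comm, ← div_le_iff₀ (by positivity)]
  exact hK m hm

open scoped Classical in
lemma Ncount'_add_eq_card (m j : ℕ) :
    Ncount' F (m + j) j = #{f ∈ rootFree F m | Omega f = j} := by
  rw [Ncount', ← Set.ncard_coe_finset]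
  congr 1
  ext f
  simp only [coe_filter, mem_rootFree, Set.mem_ofPred_eq]
  grind

lemma sum_pow_mul_Ncount'_le (hz : 0 ≤ z) (m : ℕ) (J : Finset ℕ) :
    ∑ j ∈ J, z ^ j * Ncount' F (m + j) j ≤ eulerCoeff F z m := by
  classical
  calc ∑ j ∈ J, z ^ j * Ncount' F (m + j) j
      = ∑ j ∈ J, ∑ f ∈ rootFree F m with Omega f = j, z ^ Omega f := by
        refine sum_congr rfl fun j _ => ?_
        rw [sum_congr rfl fun f hf => by rw [(mem_filter.1 hf).2], sum_const, nsmul_eq_mul,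
          Ncount'_add_eq_card, mul_comm]
    _ ≤ eulerCoeff F z m := sum_fiberwise_le_sum_of_sum_fiber_nonneg fun j _ =>
        sum_nonneg fun f _ => by positivity

lemma rpow_mul_sum_Ncount'_le (hz : 1 ≤ z) (x : ℝ) (m k : ℕ) :
    z ^ x * ∑ j ∈ Ioc ⌊x⌋₊ k, (Ncount' F (m + j) j : ℝ) ≤ eulerCoeff F z m := by
  refine le_trans ?_ (sum_pow_mul_Ncount'_le (by positivity) m (Ioc ⌊x⌋₊ k))
  rw [mul_sum]
  gcongr with j hj
  rw [← Real.rpow_natCast]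
  exact Real.rpow_le_rpow_of_exponent_le hz (Nat.lt_of_floor_lt (mem_Ioc.1 hj).1).le

theorem exists_sum_Ncount'_le (hz : 1 < z) (hzq : z < Nat.card F) :
    ∃ K : ℝ, ∀ m k : ℕ, 1 ≤ m →
      ∑ j ∈ Ioc ⌊z * Nat.card F * Real.log m / Real.log z⌋₊ k, (Ncount' F (m + j) j : ℝ) ≤
        K * Nat.card F ^ m / m := by
  obtain ⟨K, hK⟩ := exists_eulerCoeff_le hz.le hzq
  refine ⟨K, fun m k hm => ?_⟩
  have hm0 : (0 : ℝ) < m := by exact_mod_cast hm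
  have hz0 : 0 < z := by linarith
  set x := z * Nat.card F * Real.log m / Real.log z
  have hweight : z ^ x = (m : ℝ) ^ (Nat.card F * z) := by
    rw [Real.rpow_def_of_pos hz0, Real.rpow_def_of_pos hm0,
      mul_div_cancel₀ _ (Real.log_pos hz).ne']
    ring_nf
  refine le_of_mul_le_mul_left ?_ (Real.rpow_pos_of_pos hm0 (Nat.card F * z))
  calc (m : ℝ) ^ (Nat.card F * z) * ∑ j ∈ Ioc ⌊x⌋₊ k, (Ncount' F (m + j) j : ℝ)
      = z ^ x * ∑ j ∈ Ioc ⌊x⌋₊ k, (Ncount' F (m + j) j : ℝ) := by rw [hweight]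
    _ ≤ eulerCoeff F z m := rpow_mul_sum_Ncount'_le hz.le x m k
    _ ≤ K * Nat.card F ^ m * (m : ℝ) ^ (Nat.card F * z - 1) := hK m hm
    _ = _ := by
        rw [Real.rpow_sub_one hm0.ne']
        ring

lemma exists_sum_choose_mul_Ncount'_le (hq : 3 ≤ Nat.card F) (A : ℝ) :
    ∃ C : ℝ, ∀ m k : ℕ, 1 ≤ m → (k : ℝ) ≤ A * m →
      ∑ j ∈ Ioc ⌊Real.exp 1 * Nat.card F * Real.log m⌋₊ k,
          ((Nat.card F - 1 + k - j).choose (Nat.card F - 1) * Ncount' F (m + j) j : ℝ) ≤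
        C * Nat.card F ^ m * (m : ℝ) ^ (Nat.card F - 2) := by
  have hexp : Real.exp 1 < Nat.card F := Real.exp_one_lt_three.trans_le (by exact_mod_cast hq)
  obtain ⟨K, hK⟩ := exists_sum_Ncount'_le (Real.one_lt_exp_iff.2 one_pos) hexp
  simp only [Real.log_exp, div_one] at hK
  set q := Nat.card F
  refine ⟨(q + A) ^ (q - 1) * K, fun m k hm hk => ?_⟩
  have hm0 : (0 : ℝ) < m := by exact_mod_cast hm
  have hchoose : ∀ j, ((q - 1 + k - j).choose (q - 1) : ℝ) ≤ ((q + A) * m) ^ (q - 1) := fun j => by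
    have hbase : ((q - 1 + k - j : ℕ) : ℝ) ≤ (q + A) * m :=
      calc ((q - 1 + k - j : ℕ) : ℝ) ≤ (q * m + k : ℕ) := by
            have := Nat.le_mul_of_pos_right q hm
            exact_mod_cast (by omega : q - 1 + k - j ≤ q * m + k)
        _ ≤ (q + A) * m := by push_cast; linarith
    calc ((q - 1 + k - j).choose (q - 1) : ℝ) ≤ ((q - 1 + k - j : ℕ) : ℝ) ^ (q - 1) := by
          exact_mod_cast Nat.choose_le_pow _ _
      _ ≤ ((q + A) * m) ^ (q - 1) := by gcongr
  have hpow : (m : ℝ) ^ (q - 1) = (m : ℝ) ^ (q - 2) * m := by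
    rw [← pow_succ, show q - 1 = q - 2 + 1 by omega]
  calc ∑ j ∈ Ioc ⌊Real.exp 1 * q * Real.log m⌋₊ k,
        ((q - 1 + k - j).choose (q - 1) * Ncount' F (m + j) j : ℝ)
      ≤ ((q + A) * m) ^ (q - 1) *
          ∑ j ∈ Ioc ⌊Real.exp 1 * q * Real.log m⌋₊ k, (Ncount' F (m + j) j : ℝ) := by
        rw [mul_sum]
        gcongr with j
        exact hchoose j
    _ ≤ ((q + A) * m) ^ (q - 1) * (K * q ^ m / m) :=
        mul_le_mul_of_nonneg_left (hK m k hm) ((Nat.cast_nonneg _).trans (hchoose 0))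
    _ = _ := by
        rw [mul_pow, hpow]
        field_simp [hm0.ne']

theorem stmt6_general {q : ℕ} (hF : Nat.card F = q) (hq : 3 ≤ q) {B : ℝ} (hB : 1 < B) :
    ∃ C : ℝ, ∀ n : ℕ, 1 ≤ n → ∀ k : ℕ, (k : ℝ) ≤ (n : ℝ) / B →
      (∑ j ∈ Ioc (Nat.floor (Real.exp 1 * q * Real.log ((n - k : ℕ) : ℝ))) k,
          (Nat.choose (q - 1 + k - j) (q - 1) * Ncount' F (n + j - k) j : ℝ)) ≤
        C * (q : ℝ) ^ (n - k) * ((n - k : ℕ) : ℝ) ^ (q - 2) := by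
  subst hF
  obtain ⟨C, hC⟩ := exists_sum_choose_mul_Ncount'_le hq (1 / (B - 1))
  refine ⟨C, fun n hn k hk => ?_⟩
  have hn0 : (0 : ℝ) < n := by exact_mod_cast hn
  have hkn : k < n := by exact_mod_cast hk.trans_lt (div_lt_self hn0 hB)
  obtain ⟨m, rfl⟩ := Nat.exists_eq_add_of_le' hkn.le
  have hkm : (k : ℝ) ≤ 1 / (B - 1) * m := by
    rw [le_div_iff₀ (by linarith)] at hk
    push_cast at hk
    rw [one_div_mul_eq_div, le_div_iff₀ (by linarith)]
    linarith
  rw [Nat.add_sub_cancel]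
  refine le_of_eq_of_le (sum_congr rfl fun j _ => ?_) (hC m k (by omega) hkm)
  rw [show m + k + j - k = m + j by omega]

end Tail

theorem stmt6 (q : ℕ) (hq : IsPrimePow q) (hq3 : 3 ≤ q)
    (F : Type*) [Field F] [Fintype F] (hF : Fintype.card F = q) (B : ℝ) (hB : 2 ≤ B) :
    ∃ C : ℝ, ∀ n : ℕ, 2 ≤ n → ∀ k : ℕ, 1 ≤ k → (k : ℝ) ≤ (n : ℝ) / B →
      (∑ j ∈ Finset.Ioc (Nat.floor (Real.exp 1 * q * Real.log ((n - k : ℕ) : ℝ))) k,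
          (Nat.choose (q - 1 + k - j) (q - 1) * Ncount' F (n + j - k) j : ℝ)) ≤
        C * (q : ℝ) ^ (n - k) * ((n - k : ℕ) : ℝ) ^ (q - 2) := by
  obtain ⟨C, hC⟩ := stmt6_general (Nat.card_eq_fintype_card.trans hF) hq3 (one_lt_two.trans_le hB)
  exact ⟨C, fun n hn k _ => hC n (one_le_two.trans hn) k⟩
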